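/- If E_υ is continuous from above, then there exists a countably additive probability measure Q_α on (Ω, F) such that ∫ X dQ_α ≤ E_υ[X] for all X ∈ 𝒳 and sup_{X ∈ 𝒳_α} ∫ X dQ_α = sup_{X ∈ 𝒳_α} E_ῡ[X]. -/

import Mathlib

open MeasureTheory Filter Topology
open scoped ENNReal

/-- `X` belongs to the space `𝒳` of bounded measurable real-valued functions on `Ω`. -/
def MemX {Ω : Type*} [MeasurableSpace Ω] (X : Ω → ℝ) : Prop :=
  Measurable X ∧ ∃ M : ℝ, ∀ ω, |X ω| ≤ M

/-- A sublinear operator on `𝒳`: monotone, constant preserving, subadditive and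
positively homogeneous. -/
def IsSublinearOp {Ω : Type*} [MeasurableSpace Ω] (ρ : (Ω → ℝ) → ℝ) : Prop :=
  (∀ X Y : Ω → ℝ, MemX X → MemX Y → (∀ ω, Y ω ≤ X ω) → ρ Y ≤ ρ X) ∧
  (∀ c : ℝ, ρ (fun _ => c) = c) ∧
  (∀ X Y : Ω → ℝ, MemX X → MemX Y → ρ (X + Y) ≤ ρ X + ρ Y) ∧
  (∀ c : ℝ, 0 ≤ c → ∀ X : Ω → ℝ, MemX X → ρ (c • X) = c * ρ X)

/-- A linear functional on `𝒳`. -/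
def IsLinearOp {Ω : Type*} [MeasurableSpace Ω] (L : (Ω → ℝ) → ℝ) : Prop :=
  (∀ X Y : Ω → ℝ, MemX X → MemX Y → L (X + Y) = L X + L Y) ∧
  (∀ (c : ℝ) (X : Ω → ℝ), MemX X → L (c • X) = c * L X)

/-- `L` is dominated by `ρ` on `𝒳`. -/
def Dominated {Ω : Type*} [MeasurableSpace Ω] (L ρ : (Ω → ℝ) → ℝ) : Prop :=
  ∀ X : Ω → ℝ, MemX X → L X ≤ ρ X

/-- The conjugate operator `E_ῡ[X] := -E_υ[-X]`. -/
def conjOp {Ω : Type*} (ρ : (Ω → ℝ) → ℝ) : (Ω → ℝ) → ℝ := fun X => -ρ (-X)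

/-- The set `𝒳_α` of test functions at significance level `α`. -/
def testSet {Ω : Type*} [MeasurableSpace Ω] (Emu : (Ω → ℝ) → ℝ) (α : ℝ) : Set (Ω → ℝ) :=
  {X | MemX X ∧ (∀ ω, 0 ≤ X ω ∧ X ω ≤ 1) ∧ Emu X ≤ α}

/-- A sublinear operator `ρ` on `𝒳` is continuous from above: `ρ(X_n) ↓ 0` whenever
`X_n ∈ 𝒳` and `X_n ↓ 0` pointwise. -/
def ContFromAbove {Ω : Type*} [MeasurableSpace Ω] (ρ : (Ω → ℝ) → ℝ) : Prop :=
  ∀ X : ℕ → Ω → ℝ, (∀ n, MemX (X n)) → (∀ ω, Antitone fun n => X n ω) →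
    (∀ ω, Tendsto (fun n => X n ω) atTop (𝓝 0)) →
    Tendsto (fun n => ρ (X n)) atTop (𝓝 0)

lemma MemX.add {Ω : Type*} [MeasurableSpace Ω] {X Y : Ω → ℝ} (hX : MemX X) (hY : MemX Y) :
    MemX (X + Y) := by
  obtain ⟨hX, M, hM⟩ := hX
  obtain ⟨hY, N, hN⟩ := hY
  exact ⟨hX.add hY, M + N, fun ω => (abs_add_le _ _).trans (add_le_add (hM ω) (hN ω))⟩

lemma MemX.smul {Ω : Type*} [MeasurableSpace Ω] {X : Ω → ℝ} (c : ℝ) (hX : MemX X) :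
    MemX (c • X) := by
  obtain ⟨hX, M, hM⟩ := hX
  refine ⟨hX.const_smul c, |c| * M, fun ω => ?_⟩
  simp only [Pi.smul_apply, smul_eq_mul, abs_mul]
  exact mul_le_mul_of_nonneg_left (hM ω) (abs_nonneg _)

lemma MemX.neg {Ω : Type*} [MeasurableSpace Ω] {X : Ω → ℝ} (hX : MemX X) :
    MemX (-X) := by
  simpa using hX.smul (-1)

lemma MemX.sub {Ω : Type*} [MeasurableSpace Ω] {X Y : Ω → ℝ} (hX : MemX X) (hY : MemX Y) :
    MemX (X - Y) := by
  simpa [sub_eq_add_neg] using hX.add hY.neg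

lemma memX_const {Ω : Type*} [MeasurableSpace Ω] (c : ℝ) : MemX (fun _ : Ω => c) :=
  ⟨measurable_const, |c|, fun _ => le_rfl⟩

lemma memX_zero {Ω : Type*} [MeasurableSpace Ω] : MemX (0 : Ω → ℝ) := memX_const 0

lemma memX_ind {Ω : Type*} [MeasurableSpace Ω] {A : Set Ω} (hA : MeasurableSet A) (c : ℝ) :
    MemX (A.indicator (fun _ => c)) := by
  refine ⟨measurable_const.indicator hA, |c|, fun ω => ?_⟩
  by_cases h : ω ∈ A <;> simp [h]

/-- The space `𝒳` as a submodule. -/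
def subX (Ω : Type*) [MeasurableSpace Ω] : Submodule ℝ (Ω → ℝ) where
  carrier := {X | MemX X}
  add_mem' := fun h h' => h.add h'
  zero_mem' := memX_zero
  smul_mem' := fun c _ h => h.smul c

/-- Hahn-Banach for a sublinear functional on `𝒳`. -/
lemma hahn_banach_X {Ω : Type*} [MeasurableSpace Ω] (p : (Ω → ℝ) → ℝ)
    (hhom : ∀ c : ℝ, 0 < c → ∀ X, MemX X → p (c • X) = c * p X)
    (hadd : ∀ X Y, MemX X → MemX Y → p (X + Y) ≤ p X + p Y) :
    ∃ L : (Ω → ℝ) →ₗ[ℝ] ℝ, ∀ X, MemX X → L X ≤ p X := by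
  have h0 : 0 ≤ p 0 := by
    have := hadd 0 0 memX_zero memX_zero
    simp only [add_zero] at this
    linarith
  obtain ⟨g, -, hg⟩ := exists_extension_of_le_sublinear
    (E := subX Ω) ⟨⊥, 0⟩ (fun x => p x.1)
    (fun c hc x => hhom c hc x.1 x.2) (fun x y => hadd x.1 y.1 x.2 y.2)
    (by
      rintro ⟨x, hx⟩
      have hx' : x = 0 := by simpa using hx
      subst hx'
      simpa using h0)
  obtain ⟨L, hL⟩ := LinearMap.exists_extend g
  refine ⟨L, fun X hX => ?_⟩
  have := hg ⟨X, hX⟩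
  rw [← hL] at this
  exact this

/-- The cone generated by the test functions. -/
def coneK {Ω : Type*} [MeasurableSpace Ω] (Emu : (Ω → ℝ) → ℝ) (α : ℝ) : Set (ℝ × (Ω → ℝ)) :=
  {q | 0 ≤ q.1 ∧ MemX q.2 ∧ (∀ ω, 0 ≤ q.2 ω ∧ q.2 ω ≤ q.1) ∧ Emu q.2 ≤ q.1 * α}

lemma exists_lin {Ω : Type*} [MeasurableSpace Ω]
    (Emu Eups : (Ω → ℝ) → ℝ)
    (hEmu : IsSublinearOp Emu) (hEups : IsSublinearOp Eups)
    (α s : ℝ) (hα0 : 0 < α)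
    (hs : ∀ X ∈ testSet Emu α, conjOp Eups X ≤ s) :
    ∃ L : (Ω → ℝ) →ₗ[ℝ] ℝ, (∀ X, MemX X → L X ≤ Eups X) ∧
      ∀ X ∈ testSet Emu α, L X ≤ s := by
  obtain ⟨mmono, mconst, madd, mhom⟩ := hEmu
  obtain ⟨umono, uconst, uadd, uhom⟩ := hEups
  have u0 : Eups 0 = 0 := uconst 0
  have m0 : Emu 0 = 0 := mconst 0
  set K := coneK Emu α with hK
  have Kadd : ∀ q ∈ K, ∀ r ∈ K, q + r ∈ K := by
    rintro ⟨t, Z⟩ ⟨h1, h2, h3, h4⟩ ⟨t', Z'⟩ ⟨h1', h2', h3', h4'⟩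
    refine ⟨add_nonneg h1 h1', h2.add h2', fun ω => ⟨?_, ?_⟩, ?_⟩
    · exact add_nonneg (h3 ω).1 (h3' ω).1
    · exact add_le_add (h3 ω).2 (h3' ω).2
    · have := madd Z Z' h2 h2'
      simp only [Prod.mk_add_mk] at *
      linarith
  have Ksmul : ∀ c : ℝ, 0 ≤ c → ∀ q ∈ K, c • q ∈ K := by
    rintro c hc ⟨t, Z⟩ ⟨h1, h2, h3, h4⟩
    refine ⟨mul_nonneg hc h1, h2.smul c, fun ω => ⟨?_, ?_⟩, ?_⟩
    · exact mul_nonneg hc (h3 ω).1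
    · exact mul_le_mul_of_nonneg_left (h3 ω).2 hc
    · have := mhom c hc Z h2
      simp only [Prod.smul_mk, smul_eq_mul] at *
      rw [this, mul_assoc]
      exact mul_le_mul_of_nonneg_left h4 hc
  have K0 : (0 : ℝ × (Ω → ℝ)) ∈ K := by
    refine ⟨le_rfl, memX_zero, fun ω => ⟨le_rfl, le_rfl⟩, ?_⟩
    simp [m0]
  have Kpos : ∀ q ∈ K, 0 ≤ Eups (-q.2) + q.1 * s := by
    rintro ⟨t, Z⟩ ⟨h1, h2, h3, h4⟩
    simp only at *
    rcases h1.eq_or_lt with h | h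
    · subst h
      have : Z = 0 := by
        ext ω
        exact le_antisymm (h3 ω).2 (h3 ω).1
      subst this
      simp [u0]
    · have hmem : t⁻¹ • Z ∈ testSet Emu α := by
        refine ⟨h2.smul _, fun ω => ⟨?_, ?_⟩, ?_⟩
        · exact mul_nonneg (inv_nonneg.2 h1) (h3 ω).1
        · simp only [Pi.smul_apply, smul_eq_mul]
          rw [inv_mul_le_iff₀ h]
          simpa using (h3 ω).2
        · rw [mhom _ (inv_nonneg.2 h1) Z h2, inv_mul_le_iff₀ h]
          exact h4
      have := hs _ hmem
      simp only [conjOp] at this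
      rw [← smul_neg, uhom _ (inv_nonneg.2 h1) _ h2.neg] at this
      have h5 := mul_le_mul_of_nonneg_left this h1
      have h6 : t * -(t⁻¹ * Eups (-Z)) = -Eups (-Z) := by field_simp
      rw [h6] at h5
      linarith
  let F : (Ω → ℝ) → (ℝ × (Ω → ℝ)) → ℝ := fun Y q => Eups (Y - q.2) + q.1 * s
  let p : (Ω → ℝ) → ℝ := fun Y => sInf (F Y '' K)
  have bdd : ∀ Y, MemX Y → BddBelow (F Y '' K) := by
    intro Y hY
    refine ⟨-Eups (-Y), ?_⟩
    rintro _ ⟨q, hq, rfl⟩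
    have h1 := uadd (Y - q.2) (-Y) (hY.sub hq.2.1) hY.neg
    have h2 : Y - q.2 + -Y = -q.2 := by abel
    rw [h2] at h1
    have := Kpos q hq
    simp only [F]
    linarith
  have ple : ∀ Y, MemX Y → ∀ q ∈ K, p Y ≤ Eups (Y - q.2) + q.1 * s := fun Y hY q hq =>
    csInf_le (bdd Y hY) ⟨q, hq, rfl⟩
  have lep : ∀ Y (b : ℝ), (∀ q ∈ K, b ≤ Eups (Y - q.2) + q.1 * s) → b ≤ p Y := by
    intro Y b hb
    refine le_csInf ⟨_, 0, K0, rfl⟩ ?_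
    rintro _ ⟨q, hq, rfl⟩
    exact hb q hq
  have phom1 : ∀ c : ℝ, 0 < c → ∀ X, MemX X → p (c • X) ≤ c * p X := by
    intro c hc X hX
    rw [← inv_mul_le_iff₀ hc]
    refine lep _ _ fun q hq => ?_
    rw [inv_mul_le_iff₀ hc]
    have := ple (c • X) (hX.smul c) (c • q) (Ksmul c hc.le q hq)
    simp only [Prod.smul_fst, Prod.smul_snd, ← smul_sub] at this
    rw [uhom c hc.le _ (hX.sub hq.2.1)] at this
    simp only [smul_eq_mul] at this
    linarith
  obtain ⟨L, hL⟩ := hahn_banach_X p (by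
    intro c hc X hX
    refine le_antisymm (phom1 c hc X hX) ?_
    have := phom1 c⁻¹ (inv_pos.2 hc) (c • X) (hX.smul c)
    rw [smul_smul, inv_mul_cancel₀ hc.ne', one_smul, le_inv_mul_iff₀ hc] at this
    exact this) (by
    intro X Y hX hY
    rw [← sub_le_iff_le_add']
    refine lep _ _ fun q hq => ?_
    rw [sub_le_comm]
    refine lep _ _ fun r hr => ?_
    have h1 := ple (X + Y) (hX.add hY) (r + q) (Kadd r hr q hq)
    have h2 := uadd (X - r.2) (Y - q.2) (hX.sub hr.2.1) (hY.sub hq.2.1)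
    have h3 : X - r.2 + (Y - q.2) = X + Y - (r + q).2 := by
      simp only [Prod.snd_add]; abel
    rw [h3] at h2
    simp only [Prod.fst_add] at h1
    linarith)
  refine ⟨L, fun X hX => (hL X hX).trans ?_, fun X hX => (hL X hX.1).trans ?_⟩
  · simpa using ple X hX 0 K0
  · have := ple X hX.1 (1, X) ⟨zero_le_one, hX.1, hX.2.1, by simpa using hX.2.2⟩
    simpa [u0] using this

/-- Daniell-type representation. -/
lemma exists_meas {Ω : Type*} [MeasurableSpace Ω]
    (Eups : (Ω → ℝ) → ℝ) (hEups : IsSublinearOp Eups) (hcont : ContFromAbove Eups)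
    (L : (Ω → ℝ) →ₗ[ℝ] ℝ) (hL : ∀ X, MemX X → L X ≤ Eups X) :
    ∃ Q : Measure Ω, IsProbabilityMeasure Q ∧ ∀ X, MemX X → ∫ ω, X ω ∂Q = L X := by
  obtain ⟨umono, uconst, uadd, uhom⟩ := hEups
  have Lpos : ∀ X, MemX X → (∀ ω, 0 ≤ X ω) → 0 ≤ L X := by
    intro X hX h
    have h1 := hL (-X) hX.neg
    have h2 := umono (fun _ => 0) (-X) (memX_const 0) hX.neg (fun ω => by simpa using h ω)
    rw [uconst] at h2
    rw [map_neg] at h1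
    linarith
  have Lconst : ∀ c : ℝ, L (fun _ => c) = c := by
    intro c
    have h1 := hL _ (memX_const c)
    have h2 := hL _ (memX_const (-c))
    have h3 : (fun _ : Ω => -c) = -(fun _ : Ω => c) := rfl
    rw [uconst] at h1 h2
    rw [h3, map_neg] at h2
    linarith
  have Lmono : ∀ X Y, MemX X → MemX Y → (∀ ω, X ω ≤ Y ω) → L X ≤ L Y := by
    intro X Y hX hY h
    have := Lpos (Y - X) (hY.sub hX) (fun ω => sub_nonneg.2 (h ω))
    rw [map_sub] at this
    linarith
  have Lcont : ∀ X : ℕ → Ω → ℝ, (∀ n, MemX (X n)) → (∀ ω, Antitone fun n => X n ω) →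
    (∀ ω, Tendsto (fun n => X n ω) atTop (𝓝 0)) →
    Tendsto (fun n => L (X n)) atTop (𝓝 0) := by
    intro X h1 h2 h3
    refine squeeze_zero (fun n => Lpos _ (h1 n) fun ω => ?_) (fun n => hL _ (h1 n))
      (hcont X h1 h2 h3)
    exact (h2 ω).le_of_tendsto (h3 ω) n
  let ind : Set Ω → Ω → ℝ := fun A => A.indicator (fun _ => 1)
  have indpos : ∀ A, MeasurableSet A → 0 ≤ L (ind A) := fun A hA =>
    Lpos _ (memX_ind hA 1) fun ω => Set.indicator_nonneg (fun _ _ => zero_le_one) ω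
  have sig : ∀ f : ℕ → Set Ω, (∀ i, MeasurableSet (f i)) → Pairwise (Function.onFun Disjoint f) →
      HasSum (fun i => L (ind (f i))) (L (ind (⋃ i, f i))) := by
    intro f hf hd
    rw [hasSum_iff_tendsto_nat_of_nonneg (fun i => indpos _ (hf i))]
    have hind : ∀ ω, HasSum (fun i => ind (f i) ω) (ind (⋃ i, f i) ω) := by
      intro ω
      by_cases h : ω ∈ ⋃ i, f i
      · obtain ⟨i, hi⟩ := Set.mem_iUnion.1 h
        have h1 : ind (⋃ i, f i) ω = ind (f i) ω := by simp only [ind]; rw [Set.indicator_of_mem h, Set.indicator_of_mem hi]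
        rw [h1]
        refine hasSum_single i fun j hj => ?_
        refine Set.indicator_of_notMem (fun hj' => ?_) _
        exact Set.disjoint_left.1 (hd hj) hj' hi
      · have h1 : ind (⋃ i, f i) ω = 0 := Set.indicator_of_notMem h _
        rw [h1]
        convert hasSum_zero with i
        exact Set.indicator_of_notMem (fun hi => h (Set.mem_iUnion.2 ⟨i, hi⟩)) _
    have hmemsum : ∀ n : ℕ, MemX (∑ i ∈ Finset.range n, ind (f i)) := fun n =>
      Submodule.sum_mem (subX Ω) fun i _ => memX_ind (hf i) 1
    have := Lcont (fun n => ind (⋃ i, f i) - ∑ i ∈ Finset.range n, ind (f i))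
      (fun n => (memX_ind (MeasurableSet.iUnion hf) 1).sub (hmemsum n)) ?_ ?_
    · simp only [map_sub, map_sum] at this
      have h2 := (tendsto_const_nhds (x := L (ind (⋃ i, f i)))).sub this
      simpa using h2
    · intro ω
      refine antitone_nat_of_succ_le fun n => ?_
      have : 0 ≤ ind (f n) ω := Set.indicator_nonneg (fun _ _ => zero_le_one) ω
      simp only [Pi.sub_apply, Finset.sum_range_succ, Pi.add_apply]
      linarith
    · intro ω
      have h2 := (tendsto_const_nhds (x := ind (⋃ i, f i) ω)).sub (hind ω).tendsto_sum_nat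
      simpa using h2
  let Q : Measure Ω := Measure.ofMeasurable (fun A _ => ENNReal.ofReal (L (ind A)))
    (by
      have : ind ∅ = 0 := by ext; simp [ind]
      simp [this])
    (by
      intro f hf hd
      have := sig f hf hd
      rw [← ENNReal.ofReal_tsum_of_nonneg (fun i => indpos _ (hf i)) this.summable,
        this.tsum_eq])
  have hQ : ∀ A, MeasurableSet A → Q A = ENNReal.ofReal (L (ind A)) := fun A hA =>
    Measure.ofMeasurable_apply A hA
  have hprob : IsProbabilityMeasure Q := by
    refine ⟨?_⟩
    rw [hQ _ MeasurableSet.univ]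
    have : ind Set.univ = fun _ => 1 := by ext; simp [ind]
    rw [this, Lconst]
    simp
  refine ⟨Q, hprob, ?_⟩
  have hint : ∀ X, MemX X → Integrable X Q := by
    rintro X ⟨hX, M, hM⟩
    exact Integrable.of_bound hX.aestronglyMeasurable M (Eventually.of_forall hM)
  have hsmem : ∀ f : SimpleFunc Ω ℝ, MemX (f : Ω → ℝ) := by
    intro f
    obtain ⟨C, hC⟩ := f.exists_forall_norm_le
    exact ⟨f.measurable, C, hC⟩
  have hsimple : ∀ f : SimpleFunc Ω ℝ, ∫ ω, f ω ∂Q = L f := by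
    intro f
    induction f using SimpleFunc.induction with
    | const c hs =>
      rename_i s
      have h1 : (⇑(SimpleFunc.piecewise s hs (SimpleFunc.const Ω c) (SimpleFunc.const Ω 0)) : Ω → ℝ)
          = c • ind s := by
        ext ω
        by_cases h : ω ∈ s <;> simp [ind, h]
      rw [h1, map_smul]
      have h2 : ∫ ω, (c • ind s) ω ∂Q = c * ∫ ω, ind s ω ∂Q := by
        simp only [Pi.smul_apply, smul_eq_mul]
        rw [integral_const_mul]
      rw [h2, integral_indicator hs]
      simp [Measure.real, hQ s hs, indpos s hs]
    | add hd hf hg =>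
      rename_i f g
      rw [SimpleFunc.coe_add, map_add, ← hf, ← hg]
      exact integral_add (hint _ (hsmem f)) (hint _ (hsmem g))
  intro X hX
  have key : ∀ n : ℕ, |∫ ω, X ω ∂Q - L X| ≤ 1 / ((n : ℝ) + 1) := by
    intro n
    set N : ℝ := (n : ℝ) + 1 with hN
    have hNpos : 0 < N := by positivity
    have hfl : Measurable (fun ω => (⌊N * X ω⌋ : ℤ)) := (hX.1.const_mul N).floor
    obtain ⟨M, hM⟩ := hX.2
    let f : SimpleFunc Ω ℤ :=
      { toFun := fun ω => ⌊N * X ω⌋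
        measurableSet_fiber' := fun x => hfl (measurableSet_singleton x)
        finite_range' := by
          refine (Set.finite_Icc ⌊-(N * M)⌋ ⌊N * M⌋).subset ?_
          rintro _ ⟨ω, rfl⟩
          have := abs_le.1 (hM ω)
          refine ⟨Int.floor_le_floor ?_, Int.floor_le_floor ?_⟩ <;> nlinarith }
    let g : SimpleFunc Ω ℝ := f.map (fun k : ℤ => (k : ℝ) / N)
    have hg : ∀ ω, g ω = (⌊N * X ω⌋ : ℝ) / N := fun ω => rfl
    have h1 : ∀ ω, g ω ≤ X ω := by
      intro ω
      rw [hg, div_le_iff₀ hNpos, mul_comm]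
      exact Int.floor_le _
    have h2 : ∀ ω, X ω ≤ ((g : Ω → ℝ) + (fun _ : Ω => 1 / N)) ω := by
      intro ω
      rw [Pi.add_apply, hg, ← add_div, le_div_iff₀ hNpos, mul_comm]
      exact (Int.lt_floor_add_one _).le
    have a1 := Lmono _ _ (hsmem g) hX h1
    have a2 := Lmono _ _ hX ((hsmem g).add (memX_const (1 / N))) h2
    rw [map_add, Lconst] at a2
    have b1 := integral_mono (hint _ (hsmem g)) (hint _ hX) h1
    have b2 := integral_mono (hint _ hX) (hint _ ((hsmem g).add (memX_const (1 / N)))) h2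
    have b3 : ∫ ω, ((g : Ω → ℝ) + (fun _ : Ω => 1 / N)) ω ∂Q = ∫ ω, g ω ∂Q + 1 / N := by
      simp only [Pi.add_apply]
      rw [integral_add (hint _ (hsmem g)) (integrable_const _)]
      simp
    rw [b3] at b2
    rw [hsimple] at b1 b2
    rw [abs_le]
    constructor <;> linarith
  have := ge_of_tendsto' tendsto_one_div_add_atTop_nhds_zero_nat key
  exact sub_eq_zero.1 (abs_eq_zero.1 (le_antisymm this (abs_nonneg _)))

/-- If `E_υ` is continuous from above, then the functional `Q_α` of Corollary 4.2 can
be taken to be a countably additive probability measure. -/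
theorem exists_probability_Qalpha {Ω : Type*} [MeasurableSpace Ω]
    (Emu Eups : (Ω → ℝ) → ℝ)
    (hEmu : IsSublinearOp Emu) (hEups : IsSublinearOp Eups)
    (α : ℝ) (hα0 : 0 < α) (hα1 : α < 1)
    (hcont : ContFromAbove Eups) :
    ∃ Qa : Measure Ω, IsProbabilityMeasure Qa ∧
      (∀ X : Ω → ℝ, MemX X → ∫ ω, X ω ∂Qa ≤ Eups X) ∧
      sSup ((fun X : Ω → ℝ => ∫ ω, X ω ∂Qa) '' testSet Emu α) =
        sSup (conjOp Eups '' testSet Emu α) := by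
  have hb : ∀ X ∈ testSet Emu α, conjOp Eups X ≤ 1 := by
    intro X hX
    have h := hEups.1 (-X) (fun _ => -1) hX.1.neg (memX_const _)
      (fun ω => neg_le_neg (hX.2.1 ω).2)
    rw [hEups.2.1] at h
    simp only [conjOp]
    linarith
  have hbdd : BddAbove (conjOp Eups '' testSet Emu α) := by
    refine ⟨1, ?_⟩
    rintro _ ⟨X, hX, rfl⟩
    exact hb X hX
  obtain ⟨L, hL, hLs⟩ := exists_lin Emu Eups hEmu hEups α
    (sSup (conjOp Eups '' testSet Emu α)) hα0 (fun X hX => le_csSup hbdd ⟨X, hX, rfl⟩)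
  obtain ⟨Q, hQ, hQL⟩ := exists_meas Eups hEups hcont L hL
  have hne : (testSet Emu α).Nonempty := by
    refine ⟨fun _ => 0, memX_const 0, fun ω => ⟨le_rfl, zero_le_one⟩, ?_⟩
    rw [hEmu.2.1]
    exact hα0.le
  refine ⟨Q, hQ, fun X hX => (hQL X hX).trans_le (hL X hX), le_antisymm ?_ ?_⟩
  · refine csSup_le (hne.image _) ?_
    rintro _ ⟨X, hX, rfl⟩
    exact (hQL X hX.1).trans_le (hLs X hX)
  · refine csSup_le (hne.image _) ?_
    rintro _ ⟨X, hX, rfl⟩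
    have h1 : conjOp Eups X ≤ ∫ ω, X ω ∂Q := by
      rw [hQL X hX.1]
      have := hL (-X) hX.1.neg
      rw [map_neg] at this
      simp only [conjOp]
      linarith
    refine h1.trans (le_csSup ?_ ⟨X, hX, rfl⟩)
    refine ⟨sSup (conjOp Eups '' testSet Emu α), ?_⟩
    rintro _ ⟨Y, hY, rfl⟩
    exact (hQL Y hY.1).trans_le (hLs Y hY)
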